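/- arXiv:2102.01973 — 3 statements merged into one kernel-verified Lean document; each statement's English description precedes it below -/
import Mathlib

section
/- Let Φ be a rich sequence, M ⊨ T a countable model, n ∈ ℕ, and let a_0, …, a_{n−1} ∈ M satisfy M ⊨ D_{Φ,n}(a_{<n}). Then there exists a sequence a ∈ M^ℕ extending a_{<n} which realizes D_Φ and whose image is all of M (i.e. a enumerates M). In particular, D_Φ is realized by an enumeration in every countable model of T, so D_Φ is never empty. -/
open FirstOrder FirstOrder.Language

variable {L : FirstOrder.Language}

/-- A sequence `Φ = (φ_n(x_{<n}, y))_n` of formulas (with `y` a single variable) is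
rich if every formula `φ(x_{<k}, y)` appears, up to dummy variables, as `φ_n` for some
`n ≥ k`. -/
def IsRich (Φ : ∀ n : ℕ, L.Formula (Fin n ⊕ Unit)) : Prop :=
  ∀ (k : ℕ) (ψ : L.Formula (Fin k ⊕ Unit)),
    ∃ (n : ℕ) (h : k ≤ n), Φ n = ψ.relabel (Sum.map (Fin.castLE h) id)

/-- `a_{<n}` realizes `D_{Φ,n}`, i.e.
`⋀_{k<n} ∀y [φ_k(a_{<k}, y) → φ_k(a_{<k}, a_k)]` holds in `M`. -/
def RealizesDn (Φ : ∀ n : ℕ, L.Formula (Fin n ⊕ Unit)) {M : Type*} [L.Structure M]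
    (n : ℕ) (a : Fin n → M) : Prop :=
  ∀ (k : Fin n) (y : M),
    (Φ k).Realize (Sum.elim (fun i : Fin k => a (Fin.castLE k.2.le i)) (fun _ => y)) →
    (Φ k).Realize (Sum.elim (fun i : Fin k => a (Fin.castLE k.2.le i)) (fun _ => a k))

/-- The sequence `a : ℕ → M` realizes the partial type `D_Φ = ⋀_n D_{Φ,n}(x_{<n})`. -/
def RealizesD (Φ : ∀ n : ℕ, L.Formula (Fin n ⊕ Unit)) {M : Type*} [L.Structure M]
    (a : ℕ → M) : Prop :=
  ∀ (k : ℕ) (y : M),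
    (Φ k).Realize (Sum.elim (fun i : Fin k => a i) (fun _ => y)) →
    (Φ k).Realize (Sum.elim (fun i : Fin k => a i) (fun _ => a k))

theorem exists_seq_of_step {M : Type*} (step : ∀ k : ℕ, (Fin k → M) → M) :
    ∃ b : ℕ → M, ∀ k, b k = step k (fun i : Fin k => b i) := by
  refine ⟨fun k => Nat.strongRec (motive := fun _ => M)
    (fun k ih => step k (fun i => ih i i.2)) k, fun k => ?_⟩
  dsimp only
  rw [Nat.strongRec_eq]

theorem extend_aux {L : FirstOrder.Language}
    (Φ : ∀ n : ℕ, L.Formula (Fin n ⊕ Unit)) (hΦ : IsRich Φ)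
    (M : Type) [L.Structure M] [Nonempty M] [Countable M]
    (n : ℕ) (a : Fin n → M) (ha : RealizesDn Φ n a) :
    ∃ b : ℕ → M, (∀ i : Fin n, b i = a i) ∧ RealizesD Φ b ∧ Function.Surjective b := by
  classical
  obtain ⟨e, he⟩ := exists_surjective_nat M
  let P : ℕ → Prop := fun k => n ≤ k ∧ ∀ v : Fin k ⊕ Unit → M, (Φ k).Realize v
  have hP : (Set.ofPred P).Infinite := by
    rw [Set.infinite_iff_exists_gt]
    intro m
    obtain ⟨k, hk, h⟩ := hΦ (max n (m + 1)) ⊤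
    refine ⟨k, ⟨by omega, fun v => ?_⟩, by omega⟩
    rw [h, Formula.realize_relabel]
    simp [Formula.Realize]
  have hw : ∀ (k : ℕ) (p : Fin k → M), ∃ w : M, ∀ y : M,
      (Φ k).Realize (Sum.elim p (fun _ => y)) → (Φ k).Realize (Sum.elim p (fun _ => w)) := by
    intro k p
    by_cases h : ∃ y : M, (Φ k).Realize (Sum.elim p (fun _ => y))
    · obtain ⟨w, hw⟩ := h
      exact ⟨w, fun _ _ => hw⟩
    · exact ⟨Classical.arbitrary M, fun y hy => (h ⟨y, hy⟩).elim⟩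
  choose w hw using hw
  obtain ⟨b, hb⟩ := exists_seq_of_step (M := M) (fun k p =>
    if h : k < n then a ⟨k, h⟩ else if P k then e (Nat.count P k) else w k p)
  have hba : ∀ (i : ℕ) (h : i < n), b i = a ⟨i, h⟩ := fun i h => by
    rw [hb, dif_pos h]
  refine ⟨b, fun i => hba i i.2, fun k y hy => ?_, fun m => ?_⟩
  · by_cases hk : k < n
    · have h1 : (fun i : Fin k => b i) =
          fun i : Fin k => a (Fin.castLE hk.le i) := by
        funext i
        exact hba i (i.2.trans hk)
      rw [h1] at hy ⊢
      rw [hba k hk]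
      exact ha ⟨k, hk⟩ y hy
    · by_cases hPk : P k
      · exact hPk.2 _
      · have h2 : b k = w k (fun i : Fin k => b i) := by
          rw [hb k, dif_neg hk, if_neg hPk]
        rw [h2]
        exact hw k _ y hy
  · obtain ⟨j, rfl⟩ := he m
    have hj : P (Nat.nth P j) := Nat.nth_mem_of_infinite hP j
    refine ⟨Nat.nth P j, ?_⟩
    rw [hb, dif_neg (by have := hj.1; omega), if_pos hj, Nat.count_nth_of_infinite hP]

/-- STATEMENT 10: Let `Φ` be rich, `M ⊨ T` a countable model, and `a_{<n}` a tuple in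
`M` satisfying `D_{Φ,n}`.  Then `a_{<n}` extends to a sequence `b ∈ M^ℕ` realizing
`D_Φ` which enumerates `M`.  In particular, `D_Φ` is realized by an enumeration in
every countable model of `T`, so `D_Φ` is never empty. -/
theorem extend_to_DPhi_enumeration {L : FirstOrder.Language} [Countable L.Symbols]
    (T : L.Theory) (hT : T.IsComplete)
    (Φ : ∀ n : ℕ, L.Formula (Fin n ⊕ Unit)) (hΦ : IsRich Φ)
    (M : Type) [L.Structure M] [Nonempty M] [Countable M] (hM : T.Model M)
    (n : ℕ) (a : Fin n → M) (ha : RealizesDn Φ n a) :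
    (∃ b : ℕ → M, (∀ i : Fin n, b i = a i) ∧ RealizesD Φ b ∧ Function.Surjective b) ∧
    (∃ b : ℕ → M, RealizesD Φ b ∧ Function.Surjective b) := by
  exact ⟨extend_aux Φ hΦ M n a ha,
    (extend_aux Φ hΦ M 0 Fin.elim0 (fun k => k.elim0)).imp fun _ h => h.2⟩
end

section
/- Let Φ be a rich sequence, M ⊨ T a model, and a ∈ M^ℕ a sequence realizing D_Φ. Then the image {a_n : n ∈ ℕ} is the universe of an elementary substructure of M (it satisfies the Tarski–Vaught test). -/
open FirstOrder FirstOrder.Language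

variable {L : FirstOrder.Language}

/-- Tarski–Vaught for formulas in a finite tuple of parameters from the sequence. -/
theorem exists_witness_of_RealizesD {L : FirstOrder.Language}
    {Φ : ∀ n : ℕ, L.Formula (Fin n ⊕ Unit)} (hΦ : IsRich Φ)
    {M : Type*} [L.Structure M] {a : ℕ → M} (ha : RealizesD Φ a)
    {n : ℕ} (ψ : L.Formula (Fin n ⊕ Unit)) (idx : Fin n → ℕ) (y : M)
    (h : ψ.Realize (Sum.elim (fun i => a (idx i)) (fun _ => y))) :
    ∃ m : ℕ, ψ.Realize (Sum.elim (fun i => a (idx i)) (fun _ => a m)) := by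
  have hlt : ∀ i, idx i < (Finset.univ.sup idx) + 1 := fun i =>
    Nat.lt_succ_of_le (Finset.le_sup (Finset.mem_univ i))
  let g : Fin n → Fin ((Finset.univ.sup idx) + 1) := fun i => ⟨idx i, hlt i⟩
  obtain ⟨m, hm, hΦm⟩ := hΦ _ (ψ.relabel (Sum.map g id))
  have key : ∀ z : M, (Φ m).Realize (Sum.elim (fun i : Fin m => a i) (fun _ => z)) ↔
      ψ.Realize (Sum.elim (fun i => a (idx i)) (fun _ => z)) := by
    intro z
    rw [hΦm, Formula.realize_relabel, Formula.realize_relabel]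
    have : ((Sum.elim (fun i : Fin m => a i) (fun _ : Unit => z)) ∘
        Sum.map (Fin.castLE hm) id) ∘ Sum.map g id =
        Sum.elim (fun i => a (idx i)) (fun _ => z) := by
      funext i
      rcases i with i | i <;> rfl
    rw [this]
  exact ⟨m, (key _).1 (ha m y ((key y).2 h))⟩

/-- STATEMENT 12: If `Φ` is rich and `a ∈ M^ℕ` realizes `D_Φ` in a model `M ⊨ T`, then
the image `{a_n : n ∈ ℕ}` is the universe of an elementary substructure of `M` (it
satisfies the Tarski–Vaught test). -/
theorem range_of_DPhi_realization_elementary {L : FirstOrder.Language}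
    [Countable L.Symbols] (T : L.Theory) (hT : T.IsComplete)
    (Φ : ∀ n : ℕ, L.Formula (Fin n ⊕ Unit)) (hΦ : IsRich Φ)
    (M : Type*) [L.Structure M] (hM : T.Model M)
    (a : ℕ → M) (ha : RealizesD Φ a) :
    ∃ N : L.ElementarySubstructure M, ∀ x : M, x ∈ N ↔ x ∈ Set.range a := by
  classical
  let S : L.Substructure M :=
    { carrier := Set.range a
      fun_mem := by
        intro n f x hx
        choose idx hidx using hx
        obtain rfl : (fun i => a (idx i)) = x := funext hidx
        let t : L.Term (Fin n ⊕ Unit) := Term.func f (fun i => Term.var (Sum.inl i))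
        obtain ⟨m, hm⟩ := exists_witness_of_RealizesD hΦ ha
          (Term.equal (Term.var (Sum.inr ())) t) idx
          (Structure.funMap f (fun i => a (idx i)))
          (by simp [t, Formula.realize_equal])
        refine ⟨m, ?_⟩
        simpa [t, Formula.realize_equal] using hm }
  refine ⟨S.toElementarySubstructure ?_, fun x => Iff.rfl⟩
  intro n φ x y h
  have hx : ∀ i, ∃ k, a k = (x i : M) := fun i => (x i).2
  choose idx hidx using hx
  let g : Empty ⊕ Fin (n + 1) → Fin n ⊕ Unit :=
    Sum.elim Empty.elim (Fin.snoc (α := fun _ => Fin n ⊕ Unit) Sum.inl (Sum.inr ()))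
  have key : ∀ z : M, (φ.toFormula.relabel g).Realize
      (Sum.elim (fun i => a (idx i)) (fun _ => z)) ↔
      φ.Realize default (Fin.snoc ((↑) ∘ x) z : _ → M) := by
    intro z
    rw [Formula.realize_relabel, BoundedFormula.realize_toFormula]
    have h1 : ((Sum.elim (fun i => a (idx i)) (fun _ : Unit => z)) ∘ g) ∘ Sum.inr =
        (Fin.snoc ((↑) ∘ x) z : Fin (n + 1) → M) := by
      funext i
      cases i using Fin.lastCases <;> simp [g, hidx]
    rw [h1, Subsingleton.elim (_ ∘ Sum.inl) (default : Empty → M)]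
  obtain ⟨m, hm⟩ := exists_witness_of_RealizesD hΦ ha _ idx y ((key y).2 h)
  exact ⟨⟨a m, m, rfl⟩, (key _).1 hm⟩
end

section
/- Assume no model of T is a singleton, and let Φ be a rich sequence. Then B_Φ(T), the set of complete types in S_ℕ(T) extending D_Φ, equipped with the subspace topology of the Stone space S_ℕ(T), is homeomorphic to the Cantor space 2^ℕ (it is a nonempty, compact, metrizable, totally disconnected space without isolated points). -/
open FirstOrder FirstOrder.Language

variable {L : FirstOrder.Language}

/-- The (Boolean-valued) complete type of a tuple `a : α → M`: the set of formulas in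
variables `α` satisfied by `a`, viewed as a point of the Stone-type space
`L.Formula α → Bool` (with the product topology, `Bool` discrete). -/
noncomputable def tpFun {M : Type*} [L.Structure M] {α : Type*} (a : α → M) :
    L.Formula α → Bool :=
  fun φ => @decide (φ.Realize a) (Classical.propDecidable _)

/-- `B_Φ(T) = S_{D_Φ}(T)`: the set of complete types extending `D_Φ` (equivalently,
since the language is countable, the types of realizations of `D_Φ` in countable models
of `T`). -/
def BPhi (T : L.Theory) (Φ : ∀ n : ℕ, L.Formula (Fin n ⊕ Unit)) :
    Set (L.Formula ℕ → Bool) :=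
  {p | ∃ (M : Type) (_ : L.Structure M) (_ : T.Model M) (_ : Countable M) (a : ℕ → M),
    RealizesD Φ a ∧ p = tpFun a}

section Brouwer

variable {X : Type*} (c : X → ℕ → Bool)

/-- The least coordinate on which two points of `U` differ. -/
noncomputable def cutIdx (U : Set X) : ℕ :=
  sInf {n | ∃ x ∈ U, ∃ y ∈ U, c x n ≠ c y n}

/-- The branch of sets associated with a binary sequence. -/
noncomputable def branchSet (b : ℕ → Bool) : ℕ → Set X
  | 0 => Set.univ
  | i + 1 => {z | z ∈ branchSet b i ∧ c z (cutIdx c (branchSet b i)) = b i}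

/-- The branch of sets following a given point. -/
noncomputable def pointSet (x : X) : ℕ → Set X
  | 0 => Set.univ
  | i + 1 => {z | z ∈ pointSet x i ∧
      c z (cutIdx c (pointSet x i)) = c x (cutIdx c (pointSet x i))}

/-- The binary sequence coding a point. -/
noncomputable def codeMap (x : X) (i : ℕ) : Bool := c x (cutIdx c (pointSet c x i))

theorem branchSet_codeMap (x : X) (i : ℕ) : branchSet c (codeMap c x) i = pointSet c x i := by
  induction i with
  | zero => rfl
  | succ i ih => simp only [branchSet, pointSet, ih, codeMap]

theorem mem_pointSet (x : X) (i : ℕ) : x ∈ pointSet c x i := by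
  induction i with
  | zero => trivial
  | succ i ih => exact ⟨ih, rfl⟩

theorem branchSet_anti (b : ℕ → Bool) (i : ℕ) : branchSet c b (i + 1) ⊆ branchSet c b i :=
  fun _ h => h.1

theorem pointSet_eq_branchSet (b : ℕ → Bool) (x : X) (i : ℕ) (h : x ∈ branchSet c b i) :
    pointSet c x i = branchSet c b i := by
  induction i with
  | zero => rfl
  | succ i ih =>
    have h2 := ih h.1
    simp only [branchSet, pointSet, h2, h.2]

theorem cut_ge (b : ℕ → Bool) (i : ℕ) :
    ∀ n < i, ∀ x ∈ branchSet c b i, ∀ y ∈ branchSet c b i, c x n = c y n := by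
  induction i with
  | zero => intro n hn; omega
  | succ i ih =>
    intro n hn x hx y hy
    by_contra hne
    have hmem : n ∈ {n | ∃ x ∈ branchSet c b i, ∃ y ∈ branchSet c b i, c x n ≠ c y n} :=
      ⟨x, hx.1, y, hy.1, hne⟩
    have hle : cutIdx c (branchSet c b i) ≤ n := Nat.sInf_le hmem
    have hge : i ≤ cutIdx c (branchSet c b i) := by
      by_contra hlt
      push Not at hlt
      obtain ⟨x', hx', y', hy', h⟩ := Nat.sInf_mem ⟨n, hmem⟩
      exact h (ih _ hlt x' hx' y' hy')
    have : cutIdx c (branchSet c b i) = n := by omega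
    apply hne
    rw [← this, hx.2, hy.2]

theorem isClopen_branchSet [TopologicalSpace X] (hc : Continuous c) (b : ℕ → Bool) (i : ℕ) :
    IsClopen (branchSet c b i) := by
  induction i with
  | zero => exact isClopen_univ
  | succ i ih =>
    have h : Continuous fun z => c z (cutIdx c (branchSet c b i)) :=
      (continuous_apply _).comp hc
    exact ih.inter ((isClopen_discrete {b i}).preimage h)

theorem branchSet_nonempty [TopologicalSpace X] (hc : Continuous c) (hinj : Function.Injective c)
    [Nonempty X]
    (hperf : ∀ U : Set X, IsOpen U → U.Nonempty → ∃ x ∈ U, ∃ y ∈ U, x ≠ y)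
    (b : ℕ → Bool) (i : ℕ) : (branchSet c b i).Nonempty := by
  induction i with
  | zero => exact Set.univ_nonempty
  | succ i ih =>
    obtain ⟨x, hx, y, hy, hxy⟩ := hperf _ (isClopen_branchSet c hc b i).isOpen ih
    obtain ⟨n, hn⟩ := Function.ne_iff.1 (hinj.ne hxy)
    obtain ⟨x', hx', y', hy', h⟩ :=
      Nat.sInf_mem (s := {n | ∃ x ∈ branchSet c b i, ∃ y ∈ branchSet c b i, c x n ≠ c y n})
        ⟨n, x, hx, y, hy, hn⟩
    change c x' (cutIdx c (branchSet c b i)) ≠ c y' (cutIdx c (branchSet c b i)) at h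
    by_cases hb : c x' (cutIdx c (branchSet c b i)) = b i
    · exact ⟨x', hx', hb⟩
    · refine ⟨y', hy', ?_⟩
      revert h hb
      cases c x' (cutIdx c (branchSet c b i)) <;> cases c y' (cutIdx c (branchSet c b i)) <;>
        cases b i <;> simp

/-- Brouwer's characterization of the Cantor space. -/
theorem brouwer_cantor [TopologicalSpace X] [CompactSpace X] [Nonempty X]
    (hc : Continuous c) (hinj : Function.Injective c)
    (hperf : ∀ U : Set X, IsOpen U → U.Nonempty → ∃ x ∈ U, ∃ y ∈ U, x ≠ y) :
    Nonempty (X ≃ₜ (ℕ → Bool)) := by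
  have hcont : Continuous (codeMap c) := by
    refine continuous_pi fun j => ?_
    refine (IsLocallyConstant.iff_exists_open _).2 (fun x => ?_) |>.continuous
    refine ⟨pointSet c x (j + 1), ?_, mem_pointSet c x _, ?_⟩
    · rw [← branchSet_codeMap]
      exact (isClopen_branchSet c hc _ _).isOpen
    · intro z hz
      have h1 : pointSet c z j = pointSet c x j := by
        rw [← branchSet_codeMap c x]
        refine pointSet_eq_branchSet c _ z j ?_
        rw [branchSet_codeMap]; exact hz.1
      simp only [codeMap, h1]
      exact hz.2
  have hi : Function.Injective (codeMap c) := by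
    intro x y hxy
    apply hinj
    funext n
    apply cut_ge c (codeMap c x) (n + 1) n (Nat.lt_succ_self n)
    · rw [branchSet_codeMap]; exact mem_pointSet c x _
    · rw [hxy, branchSet_codeMap]; exact mem_pointSet c y _
  have hs : Function.Surjective (codeMap c) := by
    intro b
    obtain ⟨x, hx⟩ := IsCompact.nonempty_iInter_of_sequence_nonempty_isCompact_isClosed
      (branchSet c b) (branchSet_anti c b) (branchSet_nonempty c hc hinj hperf b)
      (isClopen_branchSet c hc b 0).isClosed.isCompact
      (fun i => (isClopen_branchSet c hc b i).isClosed)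
    refine ⟨x, funext fun i => ?_⟩
    rw [Set.mem_iInter] at hx
    rw [codeMap, pointSet_eq_branchSet c b x i (hx i)]
    exact (hx (i + 1)).2
  exact ⟨(Equiv.ofBijective _ ⟨hi, hs⟩).toHomeomorphOfContinuousClosed hcont hcont.isClosedMap⟩

end Brouwer

section Models

open Cardinal

/-- The `k`-th conjunct of `D_Φ` as a formula. -/
noncomputable def dForm (Φ : ∀ n : ℕ, L.Formula (Fin n ⊕ Unit)) (k : ℕ) : L.Formula ℕ :=
  (((Φ k).relabel (Sum.map (fun i : Fin k => (i : ℕ)) id)).iExs Unit).imp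
    ((Φ k).relabel (Sum.elim (fun i : Fin k => (i : ℕ)) (fun _ => k)))

theorem realize_dForm (Φ : ∀ n : ℕ, L.Formula (Fin n ⊕ Unit)) (k : ℕ) {M : Type*} [L.Structure M]
    (a : ℕ → M) : (dForm Φ k).Realize a ↔ ∀ y : M,
    (Φ k).Realize (Sum.elim (fun i : Fin k => a i) (fun _ => y)) →
    (Φ k).Realize (Sum.elim (fun i : Fin k => a i) (fun _ => a k)) := by
  have e1 : ∀ y : Unit → M, Sum.elim a y ∘ Sum.map (fun i : Fin k => (i : ℕ)) id =
      Sum.elim (fun i : Fin k => a i) (fun _ => y ()) := by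
    intro y; ext i; rcases i with i | i <;> rfl
  have e2 : a ∘ Sum.elim (fun i : Fin k => (i : ℕ)) (fun _ : Unit => k) =
      Sum.elim (fun i : Fin k => a i) (fun _ => a k) := by
    ext i; rcases i with i | i <;> rfl
  rw [dForm, Formula.realize_imp, Formula.realize_iExs, Formula.realize_relabel, e2]
  simp only [Formula.realize_relabel, e1]
  constructor
  · intro h y hy; exact h ⟨fun _ => y, hy⟩
  · rintro h ⟨y, hy⟩; exact h _ hy

theorem realizesD_iff (Φ : ∀ n : ℕ, L.Formula (Fin n ⊕ Unit)) {M : Type*} [L.Structure M]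
    (a : ℕ → M) : RealizesD Φ a ↔ ∀ k, (dForm Φ k).Realize a :=
  forall_congr' fun k => (realize_dForm Φ k a).symm

theorem tpFun_eq_true {M : Type*} [L.Structure M] {α : Type*} (a : α → M) (φ : L.Formula α) :
    tpFun a φ = true ↔ φ.Realize a := by
  simp [tpFun]

theorem exists_countable_type [Countable L.Symbols] (T : L.Theory) {M : Type*} [L.Structure M]
    [T.Model M] (a : ℕ → M) :
    ∃ (N : Type) (_ : L.Structure N) (_ : T.Model N) (_ : Countable N) (b : ℕ → N),
      ∀ φ : L.Formula ℕ, φ.Realize b ↔ φ.Realize a := by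
  obtain ⟨S, hS, hSc⟩ : ∃ S : L.ElementarySubstructure M, Set.range a ⊆ S ∧ Countable S := by
    by_cases hM : Countable M
    · exact ⟨⊤, fun _ _ => trivial, inferInstance⟩
    · have hM' : Infinite M := by
        by_contra h
        rw [not_infinite_iff_finite] at h
        exact hM inferInstance
      obtain ⟨S, h1, h2⟩ := exists_elementarySubstructure_card_eq L (M := M) (Set.range a)
        (ℵ₀ : Cardinal.{0}) le_rfl (by
          simp only [lift_aleph0, lift_le_aleph0]
          exact Cardinal.mk_le_aleph0_iff.2 (Set.countable_range a).to_subtype) (by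
          simp only [lift_aleph0, lift_le_aleph0]
          exact Cardinal.mk_le_aleph0_iff.2 ‹_›) (by simp)
      refine ⟨S, h1, Cardinal.mk_le_aleph0_iff.1 ?_⟩
      simpa using h2.le
  let e : S ≃ Shrink.{0} S := equivShrink.{0} S
  let _ : L.Structure (Shrink.{0} S) := e.inducedStructure
  let g : S ≃[L] Shrink.{0} S := e.inducedStructureEquiv
  let b : ℕ → S := fun i => ⟨a i, hS ⟨i, rfl⟩⟩
  refine ⟨Shrink.{0} S, inferInstance, StrongHomClass.theory_model g,
    e.symm.injective.countable, g ∘ b, fun φ => ?_⟩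
  rw [StrongHomClass.realize_formula g φ]
  exact (S.subtype.map_formula φ b).symm

theorem bPhi_mem_of [Countable L.Symbols] (T : L.Theory) (Φ : ∀ n : ℕ, L.Formula (Fin n ⊕ Unit))
    {M : Type*} [L.Structure M] [T.Model M] (a : ℕ → M) (ha : RealizesD Φ a) :
    tpFun a ∈ BPhi T Φ := by
  obtain ⟨N, i1, i2, i3, b, hb⟩ := exists_countable_type T a
  refine ⟨N, i1, i2, i3, b, ?_, ?_⟩
  · rw [realizesD_iff] at ha ⊢
    exact fun k => (hb _).2 (ha k)
  · funext φ
    rw [Bool.eq_iff_iff, tpFun_eq_true, tpFun_eq_true, hb]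

theorem isClosed_bPhi [Countable L.Symbols] (T : L.Theory)
    (Φ : ∀ n : ℕ, L.Formula (Fin n ⊕ Unit)) : IsClosed (BPhi T Φ) := by
  rw [isClosed_iff_ultrafilter]
  intro p u hup hu
  choose M iS iT iC a ha hp using fun q : BPhi T Φ => q.2
  have hrange : Set.range (Subtype.val : BPhi T Φ → _) ∈ u := by simpa using hu
  let w : Ultrafilter (BPhi T Φ) := u.comap Subtype.val_injective hrange
  have hw : Filter.Tendsto (Subtype.val : BPhi T Φ → _) w (nhds p) :=
    Filter.tendsto_comap.mono_right hup
  have hne : ∀ q, Nonempty (M q) := fun q => ⟨a q 0⟩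
  let A : ℕ → (w : Filter (BPhi T Φ)).Product M := fun i => (fun q => a q i : ∀ q, M q)
  have hA : ∀ φ : L.Formula ℕ, φ.Realize A ↔ ∀ᶠ q in (w : Filter (BPhi T Φ)), φ.Realize (a q) :=
    fun φ => Ultraproduct.realize_formula_cast φ (fun i q => a q i)
  have hmod : T.Model ((w : Filter (BPhi T Φ)).Product M) := by
    refine ⟨fun φ hφ => ?_⟩
    rw [Ultraproduct.sentence_realize]
    exact Filter.Eventually.of_forall fun q => (iT q).realize_of_mem φ hφ
  have hD : RealizesD Φ A := by
    rw [realizesD_iff]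
    intro k
    rw [hA]
    exact Filter.Eventually.of_forall fun q => (realizesD_iff Φ _).1 (ha q) k
  have hpA : p = tpFun A := by
    funext φ
    have h1 : ∀ᶠ q in (w : Filter (BPhi T Φ)), q.1 φ = p φ := by
      have := ((continuous_apply φ).tendsto p).comp hw
      rw [nhds_discrete, Filter.tendsto_pure] at this
      exact this
    rw [Bool.eq_iff_iff, tpFun_eq_true, hA]
    have h2 : ∀ q : BPhi T Φ, q.1 φ = true ↔ φ.Realize (a q) := fun q => by
      rw [hp q, tpFun_eq_true]
    constructor
    · intro h
      filter_upwards [h1] with q hq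
      rw [← h2, hq, h]
    · intro h
      obtain ⟨q, hq, hq'⟩ := (h1.and h).exists
      rw [← hq, h2]; exact hq'
  rw [hpA]
  exact bPhi_mem_of T Φ A hD

theorem exists_extend (Φ : ∀ n : ℕ, L.Formula (Fin n ⊕ Unit)) {M : Type*} [L.Structure M]
    (a : ℕ → M) (m : ℕ) (ha : ∀ k < m, (dForm Φ k).Realize a) :
    ∃ b : ℕ → M, (∀ i < m, b i = a i) ∧ RealizesD Φ b := by
  classical
  have hM : Nonempty M := ⟨a 0⟩
  let F : ∀ n : ℕ, (∀ i < n, M) → M := fun n f =>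
    if n < m then a n else
      Classical.epsilon fun y => (Φ n).Realize (Sum.elim (fun i : Fin n => f i i.2) (fun _ => y))
  let b : ℕ → M := fun n => Nat.strongRec F n
  have hb : ∀ n, b n = F n (fun i _ => b i) := fun n => by
    simp only [b]; rw [Nat.strongRec]
  have hba : ∀ i < m, b i = a i := fun i hi => by rw [hb]; simp only [F, if_pos hi]
  refine ⟨b, hba, fun k y hy => ?_⟩
  by_cases hk : k < m
  · have h := (realize_dForm Φ k a).1 (ha k hk) y
    have e : (fun i : Fin k => b i) = fun i : Fin k => a i :=
      funext fun i => hba _ (i.2.trans hk)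
    rw [e] at hy ⊢
    rw [hba k hk]
    exact h hy
  · have : b k = Classical.epsilon fun y =>
        (Φ k).Realize (Sum.elim (fun i : Fin k => b i) (fun _ => y)) := by
      rw [hb]; simp only [F, if_neg hk]
    rw [this]
    exact Classical.epsilon_spec (p := fun y =>
        (Φ k).Realize (Sum.elim (fun i : Fin k => b i) (fun _ => y))) ⟨y, hy⟩

theorem realize_congr_vars (φ : L.Formula ℕ) : ∃ m : ℕ, ∀ {M : Type} [L.Structure M]
    (a b : ℕ → M), (∀ i < m, a i = b i) → (φ.Realize a ↔ φ.Realize b) := by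
  classical
  obtain ⟨m, hm⟩ := (BoundedFormula.freeVarFinset φ).exists_nat_subset_range
  refine ⟨m, fun {M} _ a b h => ?_⟩
  have h1 := BoundedFormula.realize_restrictFreeVar (φ := φ) (f := id)
    (v := fun i => a i) (xs := default) a (fun _ => rfl)
  have h2 := BoundedFormula.realize_restrictFreeVar (φ := φ) (f := id)
    (v := fun i => a i) (xs := default) b (fun i => h _ (Finset.mem_range.1 (hm i.2)))
  exact h1.symm.trans h2

theorem bPhi_perfect [Countable L.Symbols] (T : L.Theory)
    (hsing : ∀ (M : Type) (_ : L.Structure M) (_ : T.Model M) (_ : Nonempty M),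
      ¬ Subsingleton M)
    (Φ : ∀ n : ℕ, L.Formula (Fin n ⊕ Unit)) (hΦ : IsRich Φ)
    (U : Set (BPhi T Φ)) (hU : IsOpen U) (hne : U.Nonempty) : ∃ x ∈ U, ∃ y ∈ U, x ≠ y := by
  obtain ⟨⟨p, hp⟩, hpU⟩ := hne
  obtain ⟨V, hV, rfl⟩ := isOpen_induced_iff.1 hU
  obtain ⟨I, u, hu, hIV⟩ := isOpen_pi_iff.1 hV p hpU
  choose f hf using fun φ : L.Formula ℕ => realize_congr_vars φ
  obtain ⟨M, i1, i2, i3, a, ha, rfl⟩ := id hp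
  obtain ⟨m, hm, hm'⟩ := hΦ (I.sup f + 1) ⊤
  have hns := hsing M i1 i2 ⟨a 0⟩
  obtain ⟨z, hz⟩ : ∃ z : M, ¬ (z = a 0 ↔ a m = a 0) := by
    by_cases h : a m = a 0
    · by_contra hcon
      push Not at hcon
      exact hns ⟨fun x y => by rw [((hcon x).2 h), ((hcon y).2 h)]⟩
    · exact ⟨a 0, by simpa using h⟩
  obtain ⟨b, hb, hbD⟩ := exists_extend Φ (Function.update a m z) (m + 1) (by
    intro k hk
    rw [realize_dForm]
    intro y
    have e : (fun i : Fin k => Function.update a m z i) = fun i : Fin k => a i :=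
      funext fun i => Function.update_of_ne (by omega) _ _
    rw [e]
    rcases Nat.lt_succ_iff_lt_or_eq.1 hk with hk | rfl
    · rw [Function.update_of_ne hk.ne]
      exact ha k y
    · intro _
      rw [hm', Formula.realize_relabel]
      exact Formula.realize_top.2 trivial)
  have hbm : b m = z := by rw [hb m (by omega)]; simp
  have hbi : ∀ i < m, b i = a i := fun i hi => by
    rw [hb i (by omega), Function.update_of_ne hi.ne]
  refine ⟨⟨_, hp⟩, hpU, ⟨tpFun b, M, i1, i2, i3, b, hbD, rfl⟩, ?_, ?_⟩
  · apply hIV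
    intro φ hφ
    have hle : f φ ≤ I.sup f := Finset.le_sup hφ
    have : tpFun b φ = tpFun a φ := by
      rw [Bool.eq_iff_iff, tpFun_eq_true, tpFun_eq_true]
      exact hf φ b a fun i hi => hbi i (by omega)
    change tpFun b φ ∈ u φ
    rw [this]
    exact (hu φ hφ).2
  · intro heq
    have h0 := congrFun (congrArg Subtype.val heq) ((Term.var m).equal (Term.var 0))
    simp only at h0
    rw [Bool.eq_iff_iff, tpFun_eq_true, tpFun_eq_true, Formula.realize_equal,
      Formula.realize_equal] at h0
    simp only [Term.realize_var, hbm, hbi 0 (by omega)] at h0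
    exact hz h0.symm

theorem bPhi_nonempty [Countable L.Symbols] (T : L.Theory) (hT : T.IsComplete)
    (Φ : ∀ n : ℕ, L.Formula (Fin n ⊕ Unit)) : (BPhi T Φ).Nonempty := by
  obtain ⟨M⟩ := hT.1
  have := M.nonempty'
  obtain ⟨b, -, hb⟩ := exists_extend Φ (fun _ : ℕ => Classical.arbitrary M) 0
    (fun k hk => by omega)
  exact ⟨_, bPhi_mem_of T Φ b hb⟩

end Models

/-- STATEMENT 13: Assume no model of `T` is a singleton, and let `Φ` be rich.  Then
`B_Φ(T)`, the space of complete types extending `D_Φ` with the (subspace) Stone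
topology, is homeomorphic to the Cantor space `2^ℕ`. -/
theorem BPhi_homeomorphic_cantor {L : FirstOrder.Language} [Countable L.Symbols]
    (T : L.Theory) (hT : T.IsComplete)
    (hsing : ∀ (M : Type) (_ : L.Structure M) (_ : T.Model M) (_ : Nonempty M),
      ¬ Subsingleton M)
    (Φ : ∀ n : ℕ, L.Formula (Fin n ⊕ Unit)) (hΦ : IsRich Φ) :
    Nonempty (↥(BPhi T Φ) ≃ₜ (ℕ → Bool)) := by
  have h1 : CompactSpace (BPhi T Φ) :=
    isCompact_iff_compactSpace.1 (isClosed_bPhi T Φ).isCompact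
  have h2 : Nonempty (BPhi T Φ) := (bPhi_nonempty T hT Φ).to_subtype
  have h3 : Nonempty (L.Formula ℕ) := ⟨⊤⟩
  obtain ⟨e, he⟩ := exists_surjective_nat (L.Formula ℕ)
  refine brouwer_cantor (fun (p : BPhi T Φ) n => p.1 (e n)) ?_ ?_
    (bPhi_perfect T hsing Φ hΦ)
  · exact continuous_pi fun n => (continuous_apply (e n)).comp continuous_subtype_val
  · intro p q hpq
    apply Subtype.ext
    funext φ
    obtain ⟨n, rfl⟩ := he φ
    exact congrFun hpq n
end
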